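/- Let L be a positive integer and let u, v ∈ ℝⁿ be nonzero unit vectors all of whose squared entries are integer multiples of 1/L, with expanded supports Ū and V̄ in {1,...,n}×{1,...,L}. Let (h(ℓ))_{ℓ∈{1,...,n}×{1,...,L}} be independent random variables, each uniformly distributed on [0,1]. Let ℓ_U and ℓ_V be the (almost surely unique) minimizers of h over Ū and over V̄, with first coordinates (block indices) j_U and j_V, and define Z = 1[h(ℓ_U) = h(ℓ_V)] · u[j_U]·v[j_V] / min(u[j_U]², v[j_V]²). Then E[Z] = ⟨u,v⟩ / M, where M = ∑_{j=1}^{n} max(u[j]², v[j]²). -/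

import Mathlib

open MeasureTheory Finset
open scoped ENNReal

/-- The product measure on `J → ℝ` in which each coordinate is an independent
uniform random variable on `[0,1]`: a uniform hash family on `J`. -/
noncomputable def uniformHash (J : Type*) [Fintype J] : Measure (J → ℝ) :=
  Measure.pi fun _ : J => (volume : Measure ℝ).restrict (Set.Icc 0 1)

/-- A minimizer of `f` over the nonempty finite set `s` (the minimizer of a uniform
hash family over a nonempty set is almost surely unique). -/
noncomputable def argminOn {α : Type*} (s : Finset α) (hs : s.Nonempty) (f : α → ℝ) : α :=
  (s.exists_min_image f hs).choose

/-- The expanded support of a vector `u` with discretization parameter `L`: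
`Ū = {(i,k) ∈ {1,...,n} × {1,...,L} : k ≤ u[i]² ⬝ L}`, so that the block
`{i} × {1,...,L}` contributes exactly `u[i]² ⬝ L` elements when `u[i]²` is an
integer multiple of `1/L`.  (Here `Fin L` represents `{1,...,L}` via `k ↦ k+1`.) -/
noncomputable def expandedSupport {n : ℕ} (L : ℕ) (u : Fin n → ℝ) :
    Finset (Fin n × Fin L) :=
  Finset.univ.filter fun p => ((p.2 : ℕ) + 1 : ℝ) ≤ (u p.1) ^ 2 * L

/-- The weighted MinHash random variable
`Z = 1[h(ℓ_U) = h(ℓ_V)] ⬝ u[j_U] v[j_V] / min(u[j_U]², v[j_V]²)`, where `ℓ_U`, `ℓ_V` are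
the minimizers of the hash `h` over the expanded supports `Ū`, `V̄`, with block indices
`j_U = ℓ_U.1`, `j_V = ℓ_V.1`. -/
noncomputable def Zw {n L : ℕ} (u v : Fin n → ℝ)
    (hU : (expandedSupport L u).Nonempty) (hV : (expandedSupport L v).Nonempty)
    (h : Fin n × Fin L → ℝ) : ℝ :=
  (if h (argminOn (expandedSupport L u) hU h) = h (argminOn (expandedSupport L v) hV h)
      then (1 : ℝ) else 0) *
    (u (argminOn (expandedSupport L u) hU h).1 * v (argminOn (expandedSupport L v) hV h).1 /
      min ((u (argminOn (expandedSupport L u) hU h).1) ^ 2)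
        ((v (argminOn (expandedSupport L v) hV h).1) ^ 2))

theorem uh_prob (J : Type*) [Fintype J] : IsProbabilityMeasure (uniformHash J) := by
  unfold uniformHash
  haveI : IsProbabilityMeasure ((volume : Measure ℝ).restrict (Set.Icc 0 1)) :=
    ⟨by simp⟩
  infer_instance

theorem uh_ac (J : Type*) [Fintype J] : uniformHash J ≪ (volume : Measure (J → ℝ)) := by
  unfold uniformHash
  rw [← Measure.restrict_pi_pi]
  exact Measure.restrict_le_self.absolutelyContinuous

theorem uh_inj (J : Type*) [Fintype J] : ∀ᵐ h ∂(uniformHash J), Function.Injective h := by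
  classical
  have key : ∀ a b : J, a ≠ b → ∀ᵐ h ∂(uniformHash J), h a ≠ h b := by
    intro a b hab
    apply (uh_ac J).ae_le
    let S : Submodule ℝ (J → ℝ) :=
      LinearMap.ker ((LinearMap.proj a : (J → ℝ) →ₗ[ℝ] ℝ) - LinearMap.proj b)
    have hS : S ≠ ⊤ := by
      intro h
      have : (Pi.single a 1 : J → ℝ) ∈ S := h ▸ Submodule.mem_top
      simp [S, Pi.single_apply, hab.symm] at this
    have h0 := Measure.addHaar_submodule (volume : Measure (J → ℝ)) S hS
    change ∀ᵐ h ∂(volume : Measure (J → ℝ)), h a ≠ h b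
    rw [ae_iff]
    convert h0 using 2
    ext h
    simp [S, sub_eq_zero]
  have : ∀ᵐ h ∂(uniformHash J), ∀ a b : J, a ≠ b → h a ≠ h b := by
    rw [ae_all_iff]; intro a
    rw [ae_all_iff]; intro b
    by_cases hab : a = b
    · simp [hab]
    · filter_upwards [key a b hab] with h hh _ using hh
  filter_upwards [this] with h hh a b hab
  by_contra hne
  exact hh a b hne hab

def minSet {J : Type*} (W : Finset J) (l : J) : Set (J → ℝ) := {h | ∀ m ∈ W, h l ≤ h m}

theorem minSet_meas {J : Type*} [Fintype J] (W : Finset J) (l : J) :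
    MeasurableSet (minSet W l) := by
  have : minSet W l = ⋂ m ∈ W, {h : J → ℝ | h l ≤ h m} := by
    ext h; simp [minSet]
  rw [this]
  exact W.measurableSet_biInter fun m _ =>
    measurableSet_le (measurable_pi_apply l) (measurable_pi_apply m)

theorem minSet_symm {J : Type*} [Fintype J] (W : Finset J) (l m : J) (hl : l ∈ W) (hm : m ∈ W) :
    (uniformHash J).real (minSet W l) = (uniformHash J).real (minSet W m) := by
  classical
  have hp := measurePreserving_piCongrLeft
    (fun _ : J => (volume : Measure ℝ).restrict (Set.Icc 0 1)) (Equiv.swap l m)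
  have := hp.measure_preimage (minSet_meas W l).nullMeasurableSet
  unfold uniformHash Measure.real
  rw [← this]
  congr 2
  ext h
  have hval : ∀ x, (MeasurableEquiv.piCongrLeft (fun _ : J => ℝ) (Equiv.swap l m)) h x
      = h (Equiv.swap l m x) := by
    intro x
    have := MeasurableEquiv.piCongrLeft_apply_apply (β := fun _ : J => ℝ) (Equiv.swap l m) h (Equiv.swap l m x)
    simpa using this
  have hsw : ∀ x ∈ W, Equiv.swap l m x ∈ W := by
    intro x hx
    rw [Equiv.swap_apply_def]
    split_ifs <;> assumption
  simp only [minSet, Set.mem_preimage, Set.mem_setOf_eq, hval, Equiv.swap_apply_left]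
  constructor
  · intro H x hx
    simpa using H _ (hsw x hx)
  · intro H x hx
    exact H _ (hsw x hx)

theorem minSet_real {J : Type*} [Fintype J] (W : Finset J) (l : J) (hl : l ∈ W) :
    (uniformHash J).real (minSet W l) = 1 / (W.card : ℝ) := by
  classical
  haveI := uh_prob J
  have h1 : ∫ h, ∑ m ∈ W, (minSet W m).indicator (fun _ => (1:ℝ)) h ∂(uniformHash J) = 1 := by
    have : ∀ᵐ h ∂(uniformHash J), ∑ m ∈ W, (minSet W m).indicator (fun _ => (1:ℝ)) h = 1 := by
      filter_upwards [uh_inj J] with h hinj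
      obtain ⟨x, hx, hmin⟩ := W.exists_min_image h ⟨l, hl⟩
      rw [Finset.sum_eq_single x]
      · exact Set.indicator_of_mem (show h ∈ minSet W x from hmin) _
      · intro b hb hbx
        apply Set.indicator_of_notMem
        intro hmem
        exact hbx (hinj (le_antisymm (hmem x hx) (hmin b hb)))
      · intro h'; exact absurd hx h'
    rw [integral_congr_ae this]
    simp
  rw [integral_finsetSum] at h1
  · simp_rw [integral_indicator_const (1:ℝ) (minSet_meas W _)] at h1
    rw [Finset.sum_congr rfl fun m hm => by rw [minSet_symm W m l hm hl]] at h1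
    have : (W.card : ℝ) ≠ 0 := by
      have := Finset.card_pos.2 ⟨l, hl⟩
      positivity
    simp at h1
    field_simp
    linarith
  · intro m _
    exact (integrable_const _).indicator (minSet_meas W m)

theorem argminOn_mem {α : Type*} (s : Finset α) (hs : s.Nonempty) (f : α → ℝ) :
    argminOn s hs f ∈ s := (s.exists_min_image f hs).choose_spec.1

theorem argminOn_le {α : Type*} (s : Finset α) (hs : s.Nonempty) (f : α → ℝ) :
    ∀ x ∈ s, f (argminOn s hs f) ≤ f x := (s.exists_min_image f hs).choose_spec.2

theorem argminOn_eq {α : Type*} (s : Finset α) (hs : s.Nonempty) (f : α → ℝ)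
    (hf : Function.Injective f) (x : α) (hx : x ∈ s) (h : ∀ y ∈ s, f x ≤ f y) :
    argminOn s hs f = x :=
  hf (le_antisymm (argminOn_le s hs f x hx) (h _ (argminOn_mem s hs f)))

theorem block_sum {n L : ℕ} (a c : Fin n → ℝ) (ha : ∀ i, ∃ k : ℕ, k ≤ L ∧ a i * L = k) :
    ∑ p ∈ (Finset.univ : Finset (Fin n × Fin L)).filter
      (fun p => ((p.2 : ℕ) + 1 : ℝ) ≤ a p.1 * L), c p.1 = ∑ i, a i * L * c i := by
  rw [Finset.sum_filter, Fintype.sum_prod_type]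
  refine Finset.sum_congr rfl fun i _ => ?_
  obtain ⟨k, hk, hak⟩ := ha i
  simp only [hak]
  rw [← Finset.sum_filter, Finset.sum_const, nsmul_eq_mul]
  congr 2
  have : ∀ x : Fin L, (((x : ℕ) + 1 : ℝ) ≤ k ↔ (x : ℕ) < k) := by
    intro x
    rw [← Nat.succ_le_iff]
    exact_mod_cast Iff.rfl
  simp only [this]
  rw [Fin.card_filter_val_lt]
  omega

theorem nat_mult {n : ℕ} (L : ℕ) (hL : 0 < L) (u : Fin n → ℝ) (hu1 : ∑ i, (u i) ^ 2 = 1)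
    (hu : ∀ i, ∃ k : ℤ, (u i) ^ 2 = (k : ℝ) / L) (i : Fin n) :
    ∃ k : ℕ, k ≤ L ∧ (u i) ^ 2 * L = k := by
  obtain ⟨k, hk⟩ := hu i
  have hL' : (0:ℝ) < L := by exact_mod_cast hL
  have h1 : (u i) ^ 2 ≤ 1 := by
    rw [← hu1]
    exact Finset.single_le_sum (f := fun i => (u i)^2) (fun j _ => sq_nonneg _) (Finset.mem_univ i)
  have h2 : (u i) ^ 2 * L = k := by rw [hk]; field_simp
  have h3 : 0 ≤ k := by
    have : (0:ℝ) ≤ k := by rw [← h2]; positivity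
    exact_mod_cast this
  lift k to ℕ using h3
  refine ⟨k, ?_, by exact_mod_cast h2⟩
  have : (k:ℝ) ≤ L := by
    have h2' : (u i) ^ 2 * L = k := by exact_mod_cast h2
    rw [← h2']; nlinarith
  exact_mod_cast this

/-- For nonzero unit vectors `u, v` with squared entries integer multiples of `1/L` and a
uniform hash family on `{1,...,n} × {1,...,L}`, the weighted MinHash random variable `Z`
satisfies `E[Z] = ⟨u,v⟩ / M` where `M = ∑ⱼ max(u[j]², v[j]²)`. -/
theorem weighted_minhash_expectation {n : ℕ} (L : ℕ) (hL : 0 < L)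
    (u v : Fin n → ℝ) (hu0 : u ≠ 0) (hv0 : v ≠ 0)
    (hu1 : ∑ i, (u i) ^ 2 = 1) (hv1 : ∑ i, (v i) ^ 2 = 1)
    (hu : ∀ i, ∃ k : ℤ, (u i) ^ 2 = (k : ℝ) / L)
    (hv : ∀ i, ∃ k : ℤ, (v i) ^ 2 = (k : ℝ) / L)
    (hU : (expandedSupport L u).Nonempty) (hV : (expandedSupport L v).Nonempty) :
    ∫ h, Zw u v hU hV h ∂(uniformHash (Fin n × Fin L))
      = (∑ k, u k * v k) / (∑ j, max ((u j) ^ 2) ((v j) ^ 2)) := by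
  classical
  haveI := uh_prob (Fin n × Fin L)
  have hL' : (0:ℝ) < L := by exact_mod_cast hL
  set U := expandedSupport L u with hUd
  set V := expandedSupport L v with hVd
  let c : Fin n → ℝ := fun j => u j * v j / min ((u j) ^ 2) ((v j) ^ 2)
  have hNu := nat_mult L hL u hu1 hu
  have hNv := nat_mult L hL v hv1 hv
  have hae : ∀ᵐ h ∂(uniformHash (Fin n × Fin L)), Zw u v hU hV h =
      ∑ l ∈ U ∩ V, (minSet (U ∪ V) l).indicator (fun _ => c l.1) h := by
    filter_upwards [uh_inj _] with h hinj
    unfold Zw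
    by_cases heq : h (argminOn U hU h) = h (argminOn V hV h)
    · rw [if_pos heq, one_mul]
      have heq' := hinj heq
      have hx1 := argminOn_mem U hU h
      have hx2 := argminOn_mem V hV h
      have hm1 := argminOn_le U hU h
      have hm2 := argminOn_le V hV h
      rw [← heq'] at hx2 hm2 ⊢
      generalize argminOn U hU h = x at *
      have hxm : h ∈ minSet (U ∪ V) x := by
        intro y hy
        rcases Finset.mem_union.1 hy with hy | hy
        · exact hm1 y hy
        · exact hm2 y hy
      rw [Finset.sum_eq_single x]
      · rw [Set.indicator_of_mem hxm]
      · intro b hb hbx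
        apply Set.indicator_of_notMem
        intro hmem
        have hbU := (Finset.mem_inter.1 hb).1
        exact hbx (hinj (le_antisymm (hmem x (Finset.mem_union_left _ hx1)) (hm1 b hbU)))
      · intro h'; exact absurd (Finset.mem_inter.2 ⟨hx1, hx2⟩) h'
    · rw [if_neg heq, zero_mul]
      symm
      apply Finset.sum_eq_zero
      intro b hb
      apply Set.indicator_of_notMem
      intro hmem
      apply heq
      obtain ⟨hbU, hbV⟩ := Finset.mem_inter.1 hb
      rw [argminOn_eq U hU h hinj b hbU fun y hy => hmem y (Finset.mem_union_left _ hy),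
        argminOn_eq V hV h hinj b hbV fun y hy => hmem y (Finset.mem_union_right _ hy)]
  rw [integral_congr_ae hae, integral_finsetSum _ fun m _ =>
    (integrable_const _).indicator (minSet_meas _ m)]
  simp_rw [integral_indicator_const _ (minSet_meas _ _)]
  rw [Finset.sum_congr rfl fun m hm => by
    rw [minSet_real (U ∪ V) m (Finset.mem_union_left _ (Finset.mem_inter.1 hm).1)]]
  have hI : U ∩ V = (Finset.univ : Finset (Fin n × Fin L)).filter
      (fun p => ((p.2 : ℕ) + 1 : ℝ) ≤ min ((u p.1) ^ 2) ((v p.1) ^ 2) * L) := by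
    ext p
    simp [hUd, hVd, expandedSupport, min_mul_of_nonneg _ _ hL'.le]
  have hW : U ∪ V = (Finset.univ : Finset (Fin n × Fin L)).filter
      (fun p => ((p.2 : ℕ) + 1 : ℝ) ≤ max ((u p.1) ^ 2) ((v p.1) ^ 2) * L) := by
    ext p
    simp [hUd, hVd, expandedSupport, max_mul_of_nonneg _ _ hL'.le]
  have hcard : ((U ∪ V).card : ℝ) = (∑ j, max ((u j) ^ 2) ((v j) ^ 2)) * L := by
    have := block_sum (L := L) (fun j => max ((u j) ^ 2) ((v j) ^ 2)) (fun _ => 1) (by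
      intro i
      rcases max_choice ((u i) ^ 2) ((v i) ^ 2) with h | h <;> simp only [h]
      · exact hNu i
      · exact hNv i)
    rw [← hW] at this
    simpa [Finset.sum_mul] using this
  have hsum : ∑ l ∈ U ∩ V, c l.1 = (∑ k, u k * v k) * L := by
    have := block_sum (L := L) (fun j => min ((u j) ^ 2) ((v j) ^ 2)) c (by
      intro i
      rcases min_choice ((u i) ^ 2) ((v i) ^ 2) with h | h <;> simp only [h]
      · exact hNu i
      · exact hNv i)
    rw [← hI] at this
    rw [this, Finset.sum_mul]
    refine Finset.sum_congr rfl fun i _ => ?_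
    simp only [c]
    by_cases h1 : u i = 0
    · simp [h1]
    by_cases h2 : v i = 0
    · simp [h2]
    have : min ((u i) ^ 2) ((v i) ^ 2) ≠ 0 := (lt_min (by positivity) (by positivity)).ne'
    field_simp
  simp only [smul_eq_mul]
  rw [← Finset.mul_sum, hsum, hcard, one_div, mul_comm, ← div_eq_mul_inv,
    mul_div_mul_right _ _ hL'.ne']
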